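/- Let μ be a measure on ℝ which is finite on bounded intervals, with ⟨g,h⟩ := ∫ g h dμ and ‖g‖ := ⟨g,g⟩^{1/2}. Let G_o := {g ∈ G_conv : g(0) ≤ −1} and G_A := {g ∈ G_conv ∩ H_{2,1} : g(0) ≥ 0}. Define G_A(x) := x²/2 and G_o(x) := −1 + (a/2 + 1/a)x⁻ + (b/2 + 1/b)x⁺ for x ∈ [−a,b], G_o(x) := G_A(x) otherwise, where a, b ≥ 2^{1/2} are assumed to satisfy ∫ x⁺ (G_A − G_o)(x) μ(dx) = 0 and ∫ x⁻ (G_A − G_o)(x) μ(dx) = 0 (for μ Lebesgue measure, a = b = 2 works). Then with ψ := G_A − G_o: (i) ‖G_o − G_A‖ = inf{‖g_o − g_A‖ : g_o ∈ G_o, g_A ∈ G_A}; (ii) ⟨1,ψ⟩ ≥ ‖ψ‖²; (iii) ⟨g,ψ⟩ ≤ g(0) ⟨1,ψ⟩ for every convex g : ℝ → (−∞,∞] with ∫_{[−a,b]}|g| dμ < ∞; (iv) ⟨g,ψ⟩ ≥ ‖ψ‖² − ⟨1,ψ⟩ for every g ∈ H_{2,1} with g(0) ≥ 0 and ∫_{[−a,b]}|g|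 dμ < ∞. -/

import Mathlib

/-!
The function `ψ = G_A - G_o` vanishes off `[-a, b]`, equals `(x - b)(x - 2/b)/2` on `[0, b]` and
`(x + a)(x + 2/a)/2` on `[-a, 0]`; since `a, b ≥ √2`, on `[0, b]` it is nonnegative up to `2/b` and
nonpositive afterwards, and symmetrically on the left.

If `g` is convex with `g 0` finite, the chord `ℓ` of `g` through `0` and `2/b` lies above `g` on
`[0, 2/b]` and below it on `[2/b, b]`, so `(g - ℓ) ψ ≤ 0` on `[0, b]`. As `ψ` is orthogonal to `x⁺`
and `x⁻`, integrating this bound and its mirror image gives `⟨g, ψ⟩ ≤ g 0 ⟨1, ψ⟩`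
(`exists_chord`, `integral_convex_le`). If `g (2/b) = ∞`, then `μ` does not charge `[2/b, b]`, and
orthogonality to `x⁺` forces `ψ = 0` almost everywhere on `(0, b]`.

Orthogonality also gives `‖ψ‖² - ⟨1, ψ⟩ = ⟨x²/2, ψ⟩` (`integral_sq_sub`), which is nonpositive by
the convex inequality for `x²/2`; hence `‖ψ‖² ≤ ⟨1, ψ⟩`. For `g` with `1`-Lipschitz derivative, `x²/2 - g` is
convex, so the convex inequality gives `⟨x²/2 - g, ψ⟩ ≤ -g 0 ⟨1, ψ⟩ ≤ 0`, the lower bound on `⟨g, ψ⟩`.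
Together, `⟨g_A - g_o, ψ⟩ ≥ ‖ψ‖²` for all admissible pairs, and `h² ≥ 2hψ - ψ²` gives minimality; the pair
`(G_o, G_A)` is itself admissible because `G_o` has a supporting line at every point.
-/

open MeasureTheory Set
open scoped ENNReal

/-- Convexity for extended-real-valued functions `ℝ → (-∞, ∞]`. -/
def ERealConvex (g : ℝ → EReal) : Prop :=
  (∀ x, g x ≠ ⊥) ∧
  ∀ x y : ℝ, ∀ l : ℝ, 0 ≤ l → l ≤ 1 →
    g (l * x + (1 - l) * y) ≤ (l : EReal) * g x + ((1 - l : ℝ) : EReal) * g y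

/-- `G_A(x) = x²/2`. -/
noncomputable def GAconv (x : ℝ) : ℝ := x^2 / 2

/-- `G_o(x) = -1 + (a/2 + 1/a) x⁻ + (b/2 + 1/b) x⁺` on `[-a, b]`, `= x²/2` off it. -/
noncomputable def GOconv (a b x : ℝ) : ℝ :=
  if x ∈ Icc (-a) b then -1 + (a/2 + 1/a) * max (-x) 0 + (b/2 + 1/b) * max x 0
  else x^2 / 2

/-- `ψ = G_A - G_o`. -/
noncomputable def psiConv (a b x : ℝ) : ℝ := GAconv x - GOconv a b x

/-- squared `L²(μ)`-distance, in `ℝ≥0∞`, between an extended-real-valued and a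
real-valued function. -/
noncomputable def eDist2 (μ : Measure ℝ) (go : ℝ → EReal) (ga : ℝ → ℝ) : ℝ≥0∞ :=
  ∫⁻ x, (((ga x : EReal) - go x).abs) ^ (2 : ℕ) ∂μ

/-! ### The function `ψ` -/

lemma GOconv_neg (a b x : ℝ) : GOconv a b (-x) = GOconv b a x := by
  unfold GOconv
  have h : (-x ∈ Icc (-a) b) ↔ (x ∈ Icc (-b) a) := by
    simp only [mem_Icc]
    constructor <;> rintro ⟨h1, h2⟩ <;> constructor <;> linarith
  simp only [h, neg_neg, neg_sq]
  split_ifs <;> ring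

lemma hasDerivAt_GAconv (x : ℝ) : HasDerivAt GAconv x x := by
  have h : HasDerivAt GAconv (((2 : ℕ) : ℝ) * x ^ (2 - 1) / 2) x :=
    (hasDerivAt_pow 2 x).div_const 2
  have e : ((2 : ℕ) : ℝ) * x ^ (2 - 1) / 2 = x := by norm_num
  rwa [e] at h

lemma psiConv_neg (a b x : ℝ) : psiConv a b (-x) = psiConv b a x := by
  unfold psiConv GAconv
  rw [GOconv_neg, neg_sq]

lemma two_le_sq {b : ℝ} (hb : Real.sqrt 2 ≤ b) : 0 < b ∧ 2 ≤ b ^ 2 :=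
  ⟨lt_of_lt_of_le (by positivity) hb, (Real.sqrt_le_left (by
    exact (lt_of_lt_of_le (by positivity) hb).le)).1 hb⟩

lemma psiConv_off {a b x : ℝ} (hx : x ∉ Icc (-a) b) : psiConv a b x = 0 := by
  simp [psiConv, GAconv, GOconv, hx]

lemma psiConv_right {a b x : ℝ} (ha : 0 < a) (hb : 0 < b) (h0 : 0 ≤ x) (hx : x ≤ b) :
    psiConv a b x = (x - b) * (x - 2 / b) / 2 := by
  have : x ∈ Icc (-a) b := ⟨by linarith, hx⟩
  simp only [psiConv, GAconv, GOconv, this, if_true, max_eq_left h0,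
    max_eq_right (neg_nonpos.2 h0)]
  field_simp
  ring

/-- The continuous function that agrees with `psiConv a b` on `[-a, b]`. -/
noncomputable def psiCont (a b x : ℝ) : ℝ :=
  x ^ 2 / 2 - (-1 + (a/2 + 1/a) * max (-x) 0 + (b/2 + 1/b) * max x 0)

lemma psiConv_eq_indicator (a b : ℝ) :
    psiConv a b = (Icc (-a) b).indicator (psiCont a b) := by
  ext x
  by_cases hx : x ∈ Icc (-a) b
  · simp [psiConv, GAconv, GOconv, hx, psiCont]
  · simp [psiConv_off hx, hx]

lemma continuous_psiCont (a b : ℝ) : Continuous (psiCont a b) := by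
  unfold psiCont; fun_prop

lemma measurable_psiConv (a b : ℝ) : Measurable (psiConv a b) := by
  rw [psiConv_eq_indicator]
  exact (continuous_psiCont a b).measurable.indicator measurableSet_Icc

lemma integrable_mul_psi {μ : Measure ℝ} {a b : ℝ} {f : ℝ → ℝ}
    (hf : IntegrableOn f (Icc (-a) b) μ) : Integrable (fun x => f x * psiConv a b x) μ := by
  have h := hf.mul_continuousOn (continuous_psiCont a b).continuousOn isCompact_Icc
  rw [← integrable_indicator_iff measurableSet_Icc] at h
  refine h.congr (Filter.Eventually.of_forall fun x => ?_)
  rw [psiConv_eq_indicator]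
  by_cases hx : x ∈ Icc (-a) b <;> simp [hx]

lemma integrable_cont_mul_psi {μ : Measure ℝ} [IsLocallyFiniteMeasure μ] {a b : ℝ} {f : ℝ → ℝ}
    (hf : Continuous f) : Integrable (fun x => f x * psiConv a b x) μ :=
  integrable_mul_psi hf.integrableOn_Icc

lemma integrable_psi_sq (μ : Measure ℝ) [IsLocallyFiniteMeasure μ] (a b : ℝ) :
    Integrable (fun x => (psiConv a b x) ^ 2) μ := by
  have h : Integrable (fun x => psiCont a b x * psiConv a b x) μ :=
    integrable_cont_mul_psi (continuous_psiCont a b)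
  refine h.congr (Filter.Eventually.of_forall fun x => ?_)
  by_cases hx : x ∈ Icc (-a) b <;> simp [psiConv_eq_indicator, hx, sq]

/-! ### Extended-real-valued convex functions -/

lemma ERealConvex.toReal_le {g : ℝ → EReal} (hg : ERealConvex g) {u l : ℝ}
    (h0 : g 0 ≠ ⊤) (hu : g u ≠ ⊤) (hl0 : 0 ≤ l) (hl1 : l ≤ 1) :
    g (l * u) ≤ ((l * (g u).toReal + (1 - l) * (g 0).toReal : ℝ) : EReal) := by
  have h := hg.2 u 0 l hl0 hl1
  rw [mul_zero, add_zero] at h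
  rw [← EReal.coe_toReal hu (hg.1 u), ← EReal.coe_toReal h0 (hg.1 0)] at h
  exact_mod_cast h

lemma ERealConvex.comp_neg {g : ℝ → EReal} (hg : ERealConvex g) :
    ERealConvex (fun x => g (-x)) := by
  refine ⟨fun x => hg.1 _, fun x y l h0 h1 => ?_⟩
  have := hg.2 (-x) (-y) l h0 h1
  rwa [show l * -x + (1 - l) * -y = -(l * x + (1 - l) * y) by ring] at this

/-- Sublevel sets of a convex function are intervals. -/
lemma ERealConvex.measurable {g : ℝ → EReal} (hg : ERealConvex g) : Measurable g := by
  refine measurable_of_Iic fun c => ?_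
  induction c using EReal.rec with
  | bot =>
    convert MeasurableSet.empty
    ext x
    simp [hg.1 x]
  | top => simp
  | coe c =>
    refine Set.OrdConnected.measurableSet ?_
    refine (Convex.ordConnected (𝕜 := ℝ) ?_)
    intro x hx y hy p q hp hq hpq
    obtain rfl : q = 1 - p := by linarith
    have hx : g x ≤ c := hx
    have hy : g y ≤ c := hy
    have h := hg.2 x y p hp (by linarith)
    have hx' : g x ≠ ⊤ := (hx.trans_lt (EReal.coe_lt_top c)).ne
    have hy' : g y ≠ ⊤ := (hy.trans_lt (EReal.coe_lt_top c)).ne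
    rw [← EReal.coe_toReal hx' (hg.1 x)] at h hx
    rw [← EReal.coe_toReal hy' (hg.1 y)] at h hy
    rw [EReal.coe_le_coe_iff] at hx hy
    refine le_trans h ?_
    have : p * (g x).toReal + (1 - p) * (g y).toReal ≤ c := by nlinarith
    exact_mod_cast this

lemma ERealConvex.of_convexOn {g : ℝ → ℝ} (hg : ConvexOn ℝ univ g) :
    ERealConvex (fun x => (g x : EReal)) := by
  refine ⟨fun x => EReal.coe_ne_bot _, fun x y l h0 h1 => ?_⟩
  have := hg.2 (mem_univ x) (mem_univ y) h0 (sub_nonneg.2 h1) (by ring)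
  simp only [smul_eq_mul] at this
  show (g (l * x + (1 - l) * y) : EReal) ≤ (l : EReal) * g x + ((1 - l : ℝ) : EReal) * g y
  rw [← EReal.coe_mul, ← EReal.coe_mul, ← EReal.coe_add]
  exact EReal.coe_le_coe_iff.2 this

/-! ### The convex inequality -/

/-- On the right half-line, `g ψ` is dominated by `ℓ ψ`, where `ℓ` is the chord of `g` through `0`
and the sign change `2/b` of `ψ`; if `g (2/b) = ⊤`, both sides agree almost everywhere with
`ℓ = g 0`. -/
lemma exists_chord {ν : Measure ℝ} [IsLocallyFiniteMeasure ν] {a b : ℝ}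
    (ha : Real.sqrt 2 ≤ a) (hb : Real.sqrt 2 ≤ b)
    (hmom : ∫ x, max x 0 * psiConv a b x ∂ν = 0) {g : ℝ → EReal} (hg : ERealConvex g)
    (h0 : g 0 ≠ ⊤) (hfin : ∀ᵐ x ∂ν, x ∈ Icc (-a) b → g x ≠ ⊤) :
    ∃ s : ℝ, ∀ᵐ x ∂ν, 0 ≤ x →
      (g x).toReal * psiConv a b x ≤ ((g 0).toReal + s * x) * psiConv a b x := by
  obtain ⟨ha0, -⟩ := two_le_sq ha
  obtain ⟨hb0, hb2⟩ := two_le_sq hb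
  have hr0 : 0 < 2 / b := by positivity
  have hrb : 2 / b ≤ b := by rw [div_le_iff₀ hb0]; nlinarith
  set r := 2 / b with hr
  by_cases hgr : g r = ⊤
  · refine ⟨0, ?_⟩
    -- beyond `r` the function is `⊤`, so almost every point of `[0, b]` lies to the left of `r`
    have hlt : ∀ᵐ x ∂ν, 0 ≤ x → x ≤ b → x < r := by
      filter_upwards [hfin] with x hx hx0 hxb
      by_contra! hrx
      have hx0' : 0 < x := hr0.trans_le hrx
      have h := hg.toReal_le (u := x) (l := r / x) h0 (hx ⟨by linarith, hxb⟩) (by positivity)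
        ((div_le_one hx0').2 hrx)
      rw [div_mul_cancel₀ _ hx0'.ne', hgr, top_le_iff] at h
      exact EReal.coe_ne_top _ h
    have hnn : 0 ≤ᵐ[ν] fun x => max x 0 * psiConv a b x := by
      filter_upwards [hlt] with x hx
      rcases le_or_gt x 0 with h | h
      · simp [max_eq_right h]
      · rcases le_or_gt x b with h' | h'
        · have := hx h.le h'
          have hp := psiConv_right (a := a) ha0 hb0 h.le h'
          show 0 ≤ max x 0 * psiConv a b x
          rw [hp, max_eq_left h.le]
          exact mul_nonneg h.le (by nlinarith)
        · simp [psiConv_off (a := a) (b := b) (x := x) (fun hh => absurd hh.2 (not_le.2 h'))]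
    have hz := (integral_eq_zero_iff_of_nonneg_ae hnn
      (integrable_cont_mul_psi (by fun_prop))).1 hmom
    filter_upwards [hz] with x hx hx0
    rcases hx0.eq_or_lt with rfl | hx0
    · simp
    · have : psiConv a b x = 0 := by
        have hx : max x 0 * psiConv a b x = 0 := hx
        rw [max_eq_left hx0.le] at hx
        exact (mul_eq_zero.1 hx).resolve_left hx0.ne'
      simp [this]
  · refine ⟨((g r).toReal - (g 0).toReal) / r, ?_⟩
    filter_upwards [hfin] with x hx hx0
    by_cases hxb : x ≤ b
    swap
    · simp [psiConv_off (a := a) (b := b) (x := x) (fun hh => absurd hh.2 hxb)]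
    have hgx := hx ⟨by linarith, hxb⟩
    rw [psiConv_right ha0 hb0 hx0 hxb, ← hr]
    rcases le_total x r with hxr | hrx
    · have h := hg.toReal_le (u := r) (l := x / r) h0 hgr (by positivity)
        ((div_le_one hr0).2 hxr)
      rw [div_mul_cancel₀ _ hr0.ne', ← EReal.coe_toReal hgx (hg.1 x),
        EReal.coe_le_coe_iff] at h
      refine mul_le_mul_of_nonneg_right (h.trans_eq ?_) (by nlinarith)
      field_simp
      ring
    · have hx0' : 0 < x := hr0.trans_le hrx
      have h := hg.toReal_le (u := x) (l := r / x) h0 hgx (by positivity)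
        ((div_le_one hx0').2 hrx)
      rw [div_mul_cancel₀ _ hx0'.ne', ← EReal.coe_toReal hgr (hg.1 r),
        EReal.coe_le_coe_iff] at h
      refine mul_le_mul_of_nonpos_right ?_ (by nlinarith)
      have h' : x * (g r).toReal ≤ r * (g x).toReal + (x - r) * (g 0).toReal := by
        have := mul_le_mul_of_nonneg_left h hx0
        refine this.trans_eq ?_
        field_simp
      rw [← mul_le_mul_iff_right₀ hr0]
      have e : r * ((g 0).toReal + ((g r).toReal - (g 0).toReal) / r * x) =
        r * (g 0).toReal + ((g r).toReal - (g 0).toReal) * x := by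
          field_simp
      rw [e]
      linarith

/-- A convex function that is finite at `0` satisfies `⟨g, ψ⟩ ≤ g 0 ⟨1, ψ⟩`. -/
lemma integral_convex_le {μ : Measure ℝ} [IsLocallyFiniteMeasure μ] {a b : ℝ}
    (ha : Real.sqrt 2 ≤ a) (hb : Real.sqrt 2 ≤ b)
    (hmomp : ∫ x, max x 0 * psiConv a b x ∂μ = 0)
    (hmomm : ∫ x, max (-x) 0 * psiConv a b x ∂μ = 0) {g : ℝ → EReal} (hg : ERealConvex g)
    (h0 : g 0 ≠ ⊤) (hfin : ∀ᵐ x ∂μ, x ∈ Icc (-a) b → g x ≠ ⊤)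
    (hint : IntegrableOn (fun x => (g x).toReal) (Icc (-a) b) μ) :
    ∫ x, (g x).toReal * psiConv a b x ∂μ ≤ (g 0).toReal * ∫ x, psiConv a b x ∂μ := by
  obtain ⟨s, hs⟩ := exists_chord ha hb hmomp hg h0 hfin
  -- the left half-line is the right half-line for the reflected measure
  have hmap : MeasurableEmbedding (fun x : ℝ => -x) := (Homeomorph.neg ℝ).measurableEmbedding
  have : IsLocallyFiniteMeasure (μ.map (fun x : ℝ => -x)) := by
    refine ⟨fun x => ⟨Icc (x - 1) (x + 1), Icc_mem_nhds (by linarith) (by linarith), ?_⟩⟩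
    rw [hmap.map_apply]
    exact ((Homeomorph.neg ℝ).isCompact_preimage.2 isCompact_Icc).measure_lt_top
  obtain ⟨t, ht⟩ := exists_chord (ν := μ.map (fun x : ℝ => -x)) (g := fun x => g (-x)) hb ha
    (by
      rw [hmap.integral_map]
      simpa only [psiConv_neg] using hmomm) hg.comp_neg (by simpa using h0)
    (by
      rw [hmap.ae_map_iff]
      filter_upwards [hfin] with x hx hx'
      rw [neg_neg]
      exact hx ⟨by linarith [hx'.2], by linarith [hx'.1]⟩)
  rw [hmap.ae_map_iff] at ht
  simp only [neg_neg, psiConv_neg, neg_zero] at ht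
  have i1 : Integrable (fun x => psiConv a b x) μ := by
    simpa using integrable_cont_mul_psi (μ := μ) (a := a) (b := b) (f := fun _ => 1) (by fun_prop)
  have i2 : Integrable (fun x => max x 0 * psiConv a b x) μ :=
    integrable_cont_mul_psi (by fun_prop)
  have i3 : Integrable (fun x => max (-x) 0 * psiConv a b x) μ :=
    integrable_cont_mul_psi (by fun_prop)
  have j1 : Integrable (fun x => (g 0).toReal * psiConv a b x + s * (max x 0 * psiConv a b x)) μ :=
    (i1.const_mul _).add (i2.const_mul _)
  calc ∫ x, (g x).toReal * psiConv a b x ∂μ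
      ≤ ∫ x, ((g 0).toReal * psiConv a b x + s * (max x 0 * psiConv a b x)
          + t * (max (-x) 0 * psiConv a b x)) ∂μ := by
        refine integral_mono_ae (integrable_mul_psi hint)
          (j1.add (i3.const_mul _)) ?_
        filter_upwards [hs, ht] with x h1 h2
        rcases le_total 0 x with hx | hx
        · rw [max_eq_left hx, max_eq_right (neg_nonpos.2 hx)]
          linarith [h1 hx]
        · rw [max_eq_right hx, max_eq_left (neg_nonneg.2 hx)]
          linarith [h2 (neg_nonneg.2 hx)]
    _ = (g 0).toReal * ∫ x, psiConv a b x ∂μ := by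
        rw [integral_add j1 (i3.const_mul _),
          integral_add (i1.const_mul _) (i2.const_mul _), integral_const_mul,
          integral_const_mul, integral_const_mul, hmomp, hmomm]
        ring

/-- `‖ψ‖² - ⟨1, ψ⟩ = ⟨x²/2, ψ⟩`, because `ψ - 1 - x²/2` is a combination of `x⁺` and `x⁻` on
`[-a, b]`. -/
lemma integral_sq_sub {μ : Measure ℝ} [IsLocallyFiniteMeasure μ] {a b : ℝ}
    (hmomp : ∫ x, max x 0 * psiConv a b x ∂μ = 0)
    (hmomm : ∫ x, max (-x) 0 * psiConv a b x ∂μ = 0) :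
    ∫ x, (psiConv a b x) ^ 2 ∂μ = ∫ x, psiConv a b x ∂μ + ∫ x, x ^ 2 / 2 * psiConv a b x ∂μ := by
  have i1 : Integrable (fun x => psiConv a b x) μ := by
    simpa using integrable_cont_mul_psi (μ := μ) (a := a) (b := b) (f := fun _ => 1) (by fun_prop)
  have i2 : Integrable (fun x => max x 0 * psiConv a b x) μ :=
    integrable_cont_mul_psi (by fun_prop)
  have i3 : Integrable (fun x => max (-x) 0 * psiConv a b x) μ :=
    integrable_cont_mul_psi (by fun_prop)
  have i4 : Integrable (fun x => x ^ 2 / 2 * psiConv a b x) μ :=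
    integrable_cont_mul_psi (by fun_prop)
  have e : (fun x => (psiConv a b x) ^ 2) = fun x => (psiConv a b x + x ^ 2 / 2 * psiConv a b x)
      - ((a/2 + 1/a) * (max (-x) 0 * psiConv a b x)
          + (b/2 + 1/b) * (max x 0 * psiConv a b x)) := by
    ext x
    by_cases hx : x ∈ Icc (-a) b
    · have : psiConv a b x = psiCont a b x := by simp [psiConv_eq_indicator, hx]
      rw [this]
      unfold psiCont
      ring
    · simp [psiConv_off hx]
  have j1 : Integrable (fun x => psiConv a b x + x ^ 2 / 2 * psiConv a b x) μ := i1.add i4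
  have j2 : Integrable (fun x => (a/2 + 1/a) * (max (-x) 0 * psiConv a b x)
      + (b/2 + 1/b) * (max x 0 * psiConv a b x)) μ := (i3.const_mul _).add (i2.const_mul _)
  rw [e, integral_sub j1 j2, integral_add i1 i4,
    integral_add (i3.const_mul _) (i2.const_mul _), integral_const_mul, integral_const_mul,
    hmomp, hmomm]
  ring

lemma integral_sq_le {μ : Measure ℝ} [IsLocallyFiniteMeasure μ] {a b : ℝ}
    (ha : Real.sqrt 2 ≤ a) (hb : Real.sqrt 2 ≤ b)
    (hmomp : ∫ x, max x 0 * psiConv a b x ∂μ = 0)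
    (hmomm : ∫ x, max (-x) 0 * psiConv a b x ∂μ = 0) :
    ∫ x, (psiConv a b x) ^ 2 ∂μ ≤ ∫ x, psiConv a b x ∂μ := by
  have hc : ConvexOn ℝ univ (fun x : ℝ => x ^ 2 / 2) := by
    have := (even_two.convexOn_pow (𝕜 := ℝ)).smul (c := (1 / 2 : ℝ)) (by norm_num)
    refine this.congr fun x _ => ?_
    simp only [smul_eq_mul]
    ring
  have h := integral_convex_le ha hb hmomp hmomm (ERealConvex.of_convexOn hc)
    (EReal.coe_ne_top _) (Filter.Eventually.of_forall fun x _ => EReal.coe_ne_top _)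
    (by
      simp only [EReal.toReal_coe]
      exact Continuous.integrableOn_Icc (by fun_prop))
  rw [integral_sq_sub hmomp hmomm]
  simp only [EReal.toReal_coe] at h
  norm_num at h
  linarith

/-- The lower bound on `⟨g, ψ⟩` holds because `x²/2 - g` is convex when `g'` is `1`-Lipschitz. -/
lemma integral_smooth_ge {μ : Measure ℝ} [IsLocallyFiniteMeasure μ] {a b : ℝ}
    (ha : Real.sqrt 2 ≤ a) (hb : Real.sqrt 2 ≤ b)
    (hmomp : ∫ x, max x 0 * psiConv a b x ∂μ = 0)
    (hmomm : ∫ x, max (-x) 0 * psiConv a b x ∂μ = 0) {g g' : ℝ → ℝ}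
    (hg : ∀ x, HasDerivAt g (g' x) x) (hL : ∀ x y : ℝ, |g' x - g' y| ≤ |x - y|) (h0 : 0 ≤ g 0) :
    (∫ x, (psiConv a b x)^2 ∂μ) - (∫ x, psiConv a b x ∂μ) ≤ ∫ x, g x * psiConv a b x ∂μ := by
  have hcont : Continuous g := continuous_iff_continuousAt.2 fun x => (hg x).continuousAt
  have hd : ∀ x, HasDerivAt (fun x : ℝ => x ^ 2 / 2 - g x) (x - g' x) x :=
    fun x => (hasDerivAt_GAconv x).sub (hg x)
  have hc : ConvexOn ℝ univ (fun x : ℝ => x ^ 2 / 2 - g x) := by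
    refine Monotone.convexOn_univ_of_deriv (fun x => (hd x).differentiableAt) fun x y hxy => ?_
    rw [(hd x).deriv, (hd y).deriv]
    have := (abs_le.1 (hL y x)).2
    have h2 := (abs_le.1 (hL y x)).1
    rw [abs_of_nonneg (sub_nonneg.2 hxy)] at this
    linarith
  have h := integral_convex_le ha hb hmomp hmomm (ERealConvex.of_convexOn hc)
    (EReal.coe_ne_top _) (Filter.Eventually.of_forall fun x _ => EReal.coe_ne_top _)
    (by
      simp only [EReal.toReal_coe]
      exact Continuous.integrableOn_Icc (by fun_prop))
  simp only [EReal.toReal_coe, sub_mul] at h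
  rw [integral_sub (integrable_cont_mul_psi (by fun_prop)) (integrable_cont_mul_psi hcont)] at h
  have h1 : 0 ≤ ∫ x, psiConv a b x ∂μ :=
    (integral_nonneg fun x => sq_nonneg _).trans (integral_sq_le ha hb hmomp hmomm)
  rw [integral_sq_sub hmomp hmomm]
  have := mul_nonneg h0 h1
  norm_num at h
  linarith

/-! ### Convexity of `G_o` -/

lemma GOconv_support_right {a b x : ℝ} (ha : Real.sqrt 2 ≤ a) (hb : Real.sqrt 2 ≤ b)
    (hx : 0 ≤ x) : ∃ m : ℝ, ∀ y, GOconv a b x + m * (y - x) ≤ GOconv a b y := by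
  obtain ⟨ha0, ha2⟩ := two_le_sq ha
  obtain ⟨hb0, hb2⟩ := two_le_sq hb
  have hp : 0 < 1 / b := by positivity
  have hpb : 1 / b * b = 1 := by field_simp
  have hpa : 1 / a * a = 1 := by field_simp
  have hp' : 0 < 1 / a := by positivity
  have hpb2 : 1 / b ≤ b / 2 := by rw [div_le_div_iff₀ hb0 two_pos]; nlinarith
  set p := 1 / b
  set q := 1 / a
  rcases le_or_gt x b with hxb | hxb
  · refine ⟨b / 2 + p, fun y => ?_⟩
    have e : GOconv a b x = -1 + (b / 2 + p) * x := by
      rw [GOconv, if_pos ⟨by linarith, hxb⟩, max_eq_right (neg_nonpos.2 hx), max_eq_left hx]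
      ring
    rw [e, GOconv]
    split_ifs with hy
    · rcases le_total 0 y with h | h
      · rw [max_eq_right (neg_nonpos.2 h), max_eq_left h]
        linarith
      · rw [max_eq_right h, max_eq_left (neg_nonneg.2 h)]
        have : (b / 2 + p) * y ≤ 0 := mul_nonpos_of_nonneg_of_nonpos (by positivity) h
        have : 0 ≤ (a / 2 + q) * -y := mul_nonneg (by positivity) (by linarith)
        linarith
    · rcases le_total 0 y with h | h
      · have hyb : b < y := by
          by_contra! hh
          exact hy ⟨by linarith, hh⟩
        -- `y²/2 + 1 - (b/2 + 1/b) y = (y - b)(y - 2/b)/2`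
        nlinarith [mul_nonneg (sub_nonneg.2 hyb.le) (by linarith : 0 ≤ y - 2 * p)]
      · have : (b / 2 + p) * y ≤ 0 := mul_nonpos_of_nonneg_of_nonpos (by positivity) h
        nlinarith [sq_nonneg y]
  · refine ⟨x, fun y => ?_⟩
    have e : GOconv a b x = x ^ 2 / 2 := by
      rw [GOconv, if_neg fun h => absurd h.2 (not_le.2 hxb)]
    rw [e, GOconv]
    split_ifs with hy
    · have hD : 1 ≤ x ^ 2 / 2 := by nlinarith
      rcases le_total 0 y with h | h
      · rw [max_eq_right (neg_nonpos.2 h), max_eq_left h]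
        -- the slope `b/2 + 1/b` is at most `x`, so the gap is smallest at `y = b`
        nlinarith [mul_nonneg (sub_nonneg.2 hy.2) (by linarith : 0 ≤ x - (b / 2 + p)),
          sq_nonneg (x - b)]
      · rw [max_eq_right h, max_eq_left (neg_nonneg.2 h)]
        have : x * y ≤ 0 := mul_nonpos_of_nonneg_of_nonpos hx h
        have : 0 ≤ (a / 2 + q) * -y := mul_nonneg (by positivity) (by linarith)
        nlinarith
    · nlinarith [sq_nonneg (x - y)]

lemma convexOn_GOconv {a b : ℝ} (ha : Real.sqrt 2 ≤ a) (hb : Real.sqrt 2 ≤ b) :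
    ConvexOn ℝ univ (GOconv a b) := by
  have hs : ∀ x, ∃ m : ℝ, ∀ y, GOconv a b x + m * (y - x) ≤ GOconv a b y := by
    intro x
    rcases le_total 0 x with hx | hx
    · exact GOconv_support_right ha hb hx
    · obtain ⟨m, hm⟩ := GOconv_support_right hb ha (neg_nonneg.2 hx)
      refine ⟨-m, fun y => ?_⟩
      have := hm (-y)
      rw [GOconv_neg, GOconv_neg] at this
      linarith
  refine ⟨convex_univ, fun x _ y _ s t hs0 ht0 hst => ?_⟩
  obtain ⟨m, hm⟩ := hs (s • x + t • y)
  have h1 := mul_le_mul_of_nonneg_left (hm x) hs0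
  have h2 := mul_le_mul_of_nonneg_left (hm y) ht0
  simp only [smul_eq_mul] at *
  obtain rfl : t = 1 - s := by linarith
  linarith

/-! ### The minimal distance -/

lemma eDist2_GO (μ : Measure ℝ) [IsLocallyFiniteMeasure μ] (a b : ℝ) :
    eDist2 μ (fun x => (GOconv a b x : EReal)) GAconv =
      ENNReal.ofReal (∫ x, (psiConv a b x) ^ 2 ∂μ) := by
  have hi : Integrable (fun x => (psiConv a b x) ^ 2) μ :=
    integrable_psi_sq μ a b
  rw [ofReal_integral_eq_lintegral_ofReal hi (Filter.Eventually.of_forall fun x => sq_nonneg _)]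
  refine lintegral_congr fun x => ?_
  rw [← EReal.coe_sub, EReal.abs_def, ← ENNReal.ofReal_pow (abs_nonneg _), sq_abs]
  rfl

lemma eDist2_ge {μ : Measure ℝ} [IsLocallyFiniteMeasure μ] {a b : ℝ}
    (ha : Real.sqrt 2 ≤ a) (hb : Real.sqrt 2 ≤ b)
    (hmomp : ∫ x, max x 0 * psiConv a b x ∂μ = 0)
    (hmomm : ∫ x, max (-x) 0 * psiConv a b x ∂μ = 0) {go : ℝ → EReal} (hgo : ERealConvex go)
    (hgo0 : go 0 ≤ ((-1 : ℝ) : EReal)) {g g' : ℝ → ℝ}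
    (hg : ∀ x, HasDerivAt g (g' x) x) (hL : ∀ x y : ℝ, |g' x - g' y| ≤ |x - y|) (h0 : 0 ≤ g 0) :
    ENNReal.ofReal (∫ x, (psiConv a b x) ^ 2 ∂μ) ≤ eDist2 μ go g := by
  by_cases htop : eDist2 μ go g = ⊤
  · rw [htop]; exact le_top
  have hcont : Continuous g := continuous_iff_continuousAt.2 fun x => (hg x).continuousAt
  have hm : Measurable fun x => (go x).toReal := hgo.measurable.ereal_toReal
  set h : ℝ → ℝ := fun x => g x - (go x).toReal with hh
  have hhm : Measurable h := hcont.measurable.sub hm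
  have hval : ∀ x, (((g x : EReal) - go x).abs) ^ (2 : ℕ) =
      if go x = ⊤ then ⊤ else ENNReal.ofReal (h x ^ 2) := fun x => by
    split_ifs with hx
    · simp [hx]
    · have : (g x : EReal) - go x = ((h x : ℝ) : EReal) := by
        rw [hh, EReal.coe_sub, EReal.coe_toReal hx (hgo.1 x)]
      rw [this, EReal.abs_def, ← ENNReal.ofReal_pow (abs_nonneg _), sq_abs]
  have hfin : ∀ᵐ x ∂μ, go x ≠ ⊤ := by
    have hmeas : Measurable fun x => (((g x : EReal) - go x).abs) ^ (2 : ℕ) := by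
      simp only [hval]
      exact Measurable.ite (hgo.measurable (measurableSet_singleton ⊤)) measurable_const
        (hhm.pow_const 2).ennreal_ofReal
    filter_upwards [ae_lt_top hmeas htop] with x hx hx'
    rw [hval, if_pos hx'] at hx
    exact lt_irrefl _ hx
  have hE : eDist2 μ go g = ∫⁻ x, ENNReal.ofReal (h x ^ 2) ∂μ := by
    refine lintegral_congr_ae ?_
    filter_upwards [hfin] with x hx
    rw [hval, if_neg hx]
  have hi : Integrable (fun x => h x ^ 2) μ := by
    refine ⟨(hhm.pow_const 2).aestronglyMeasurable, ?_⟩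
    rw [hasFiniteIntegral_iff_ofReal (Filter.Eventually.of_forall fun x => sq_nonneg _), ← hE]
    exact lt_top_iff_ne_top.2 htop
  have hhi : IntegrableOn h (Icc (-a) b) μ := by
    have h1 : IntegrableOn (fun _ => (1 : ℝ)) (Icc (-a) b) μ := continuous_const.integrableOn_Icc
    refine Integrable.mono' (h1.add hi.integrableOn) hhm.aestronglyMeasurable
      (Filter.Eventually.of_forall fun x => ?_)
    show |h x| ≤ 1 + h x ^ 2
    nlinarith [sq_abs (h x), sq_nonneg (|h x| - 1)]
  have hgi : IntegrableOn g (Icc (-a) b) μ := hcont.integrableOn_Icc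
  have hgoi : IntegrableOn (fun x => (go x).toReal) (Icc (-a) b) μ := by
    refine (hgi.sub hhi).congr (Filter.Eventually.of_forall fun x => ?_)
    simp [hh]
  rw [hE, ← ofReal_integral_eq_lintegral_ofReal hi
    (Filter.Eventually.of_forall fun x => sq_nonneg _)]
  refine ENNReal.ofReal_le_ofReal ?_
  have hgo0' : go 0 ≠ ⊤ := (hgo0.trans_lt (EReal.coe_lt_top _)).ne
  have k1 := integral_convex_le ha hb hmomp hmomm hgo hgo0'
    (hfin.mono fun x hx _ => hx) hgoi
  have k2 := integral_smooth_ge ha hb hmomp hmomm hg hL h0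
  have k3 := integral_sq_le ha hb hmomp hmomm
  have k4 : (go 0).toReal ≤ -1 := by
    rw [← EReal.coe_toReal hgo0' (hgo.1 0)] at hgo0
    exact EReal.coe_le_coe_iff.1 hgo0
  have k5 : 0 ≤ ∫ x, (psiConv a b x) ^ 2 ∂μ := integral_nonneg fun x => sq_nonneg _
  have k6 : ∫ x, h x * psiConv a b x ∂μ =
      ∫ x, g x * psiConv a b x ∂μ - ∫ x, (go x).toReal * psiConv a b x ∂μ := by
    rw [← integral_sub (integrable_mul_psi hgi) (integrable_mul_psi hgoi)]
    simp only [hh, sub_mul]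
  have hψi : Integrable (fun x => (psiConv a b x) ^ 2) μ :=
    integrable_psi_sq μ a b
  have k7 : ∫ x, (2 * (h x * psiConv a b x) - (psiConv a b x) ^ 2) ∂μ ≤ ∫ x, h x ^ 2 ∂μ := by
    refine integral_mono (((integrable_mul_psi hhi).const_mul 2).sub hψi) hi fun x => ?_
    show 2 * (h x * psiConv a b x) - (psiConv a b x) ^ 2 ≤ h x ^ 2
    nlinarith [sq_nonneg (h x - psiConv a b x)]
  rw [integral_sub ((integrable_mul_psi hhi).const_mul 2) hψi, integral_const_mul] at k7
  nlinarith

/-- Theorem `OptimizationL`, convex case: with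
`G_o := {g ∈ G_conv : g(0) ≤ -1}` (extended-real-valued convex functions) and
`G_A := {g ∈ G_conv ∩ H_{2,1} : g(0) ≥ 0}`, if `a, b ≥ √2` are such that
`∫ x⁺ (G_A - G_o) dμ = ∫ x⁻ (G_A - G_o) dμ = 0`, then the pair `(G_o, G_A)` above
minimizes the `L²(μ)`-distance, and `ψ := G_A - G_o` satisfies `⟨1,ψ⟩ ≥ ‖ψ‖²`,
the one-sided bias inequality (iii) and the lower bound (iv) on `H_{2,1}`. -/
theorem stmt13 (μ : Measure ℝ) (hμfin : ∀ p q : ℝ, μ (Icc p q) < ⊤)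
    (a b : ℝ) (ha : Real.sqrt 2 ≤ a) (hb : Real.sqrt 2 ≤ b)
    (hmomp : ∫ x, max x 0 * psiConv a b x ∂μ = 0)
    (hmomm : ∫ x, max (-x) 0 * psiConv a b x ∂μ = 0) :
    -- (i) minimal L²(μ)-distance
    ((eDist2 μ (fun x => (GOconv a b x : EReal)) GAconv) ^ ((1:ℝ)/2) =
      ⨅ p : {q : (ℝ → EReal) × ((ℝ → ℝ) × (ℝ → ℝ)) //
          ERealConvex q.1 ∧ q.1 0 ≤ ((-1 : ℝ) : EReal) ∧
          ConvexOn ℝ univ q.2.1 ∧ (∀ x : ℝ, HasDerivAt q.2.1 (q.2.2 x) x) ∧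
          (∀ x y : ℝ, |q.2.2 x - q.2.2 y| ≤ |x - y|) ∧ 0 ≤ q.2.1 0},
        (eDist2 μ p.1.1 p.1.2.1) ^ ((1:ℝ)/2)) ∧
    -- (ii) ⟨1,ψ⟩ ≥ ‖ψ‖²
    ((∫ x, (psiConv a b x)^2 ∂μ) ≤ ∫ x, psiConv a b x ∂μ) ∧
    -- (iii) ⟨g,ψ⟩ ≤ g(0)⟨1,ψ⟩ for convex (extended-real-valued) g
    (∀ g : ℝ → EReal, ERealConvex g → Measurable g →
      (∀ᵐ x ∂μ.restrict (Icc (-a) b), g x ≠ ⊤) →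
      IntegrableOn (fun x => (g x).toReal) (Icc (-a) b) μ →
      ((∫ x, (g x).toReal * psiConv a b x ∂μ : ℝ) : EReal) ≤
        g 0 * ((∫ x, psiConv a b x ∂μ : ℝ) : EReal)) ∧
    -- (iv) ⟨g,ψ⟩ ≥ ‖ψ‖² - ⟨1,ψ⟩ for g ∈ H_{2,1} with g(0) ≥ 0
    (∀ g g' : ℝ → ℝ, (∀ x : ℝ, HasDerivAt g (g' x) x) →
      (∀ x y : ℝ, |g' x - g' y| ≤ |x - y|) → 0 ≤ g 0 →
      IntegrableOn g (Icc (-a) b) μ →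
      (∫ x, (psiConv a b x)^2 ∂μ) - (∫ x, psiConv a b x ∂μ) ≤
        ∫ x, g x * psiConv a b x ∂μ) := by
  have : IsLocallyFiniteMeasure μ :=
    ⟨fun x => ⟨Icc (x - 1) (x + 1), Icc_mem_nhds (by linarith) (by linarith), hμfin _ _⟩⟩
  have hii := integral_sq_le ha hb hmomp hmomm
  refine ⟨?_, hii, ?_, ?_⟩
  · apply le_antisymm
    · refine le_iInf fun p => ?_
      obtain ⟨⟨go, g, g'⟩, hgo, hgo0, -, hg, hL, h0⟩ := p
      rw [eDist2_GO]
      exact ENNReal.rpow_le_rpow (eDist2_ge ha hb hmomp hmomm hgo hgo0 hg hL h0) (by norm_num)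
    · obtain ⟨ha0, -⟩ := two_le_sq ha
      obtain ⟨hb0, -⟩ := two_le_sq hb
      refine iInf_le_of_le ⟨(fun x => (GOconv a b x : EReal), GAconv, fun x => x),
        ERealConvex.of_convexOn (convexOn_GOconv ha hb), ?_, ?_, hasDerivAt_GAconv, fun x y => le_rfl, ?_⟩ le_rfl
      · have : GOconv a b 0 = -1 := by
          rw [GOconv, if_pos ⟨by linarith, hb0.le⟩]
          simp
        exact (congrArg Real.toEReal this).le
      · refine Monotone.convexOn_univ_of_deriv
          (fun x => (hasDerivAt_GAconv x).differentiableAt) fun x y hxy => ?_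
        rwa [(hasDerivAt_GAconv x).deriv, (hasDerivAt_GAconv y).deriv]
      · simp [GAconv]
  · intro g hg _ hfin hint
    by_cases h0 : g 0 = ⊤
    · have h1 : 0 ≤ ∫ x, psiConv a b x ∂μ := (integral_nonneg fun x => sq_nonneg _).trans hii
      rw [h0]
      rcases h1.eq_or_lt with h1 | h1
      · -- `⊤ * 0 = 0`, so the left side has to vanish: `‖ψ‖² ≤ 0` makes `ψ` null
        have hz : ∫ x, (psiConv a b x) ^ 2 ∂μ = 0 :=
          le_antisymm (hii.trans_eq h1.symm) (integral_nonneg fun x => sq_nonneg _)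
        have hz' := (integral_eq_zero_iff_of_nonneg (fun x => sq_nonneg _)
          (integrable_psi_sq μ a b)).1 hz
        have : ∫ x, (g x).toReal * psiConv a b x ∂μ = 0 := by
          refine integral_eq_zero_of_ae ?_
          filter_upwards [hz'] with x hx
          have hx : psiConv a b x ^ 2 = 0 := hx
          simp [pow_eq_zero_iff two_ne_zero |>.1 hx]
        rw [this, ← h1]
        simp
      · rw [EReal.top_mul_coe_of_pos h1]
        exact le_top
    · rw [ae_restrict_iff' measurableSet_Icc] at hfin
      rw [← EReal.coe_toReal h0 (hg.1 0)]
      exact_mod_cast integral_convex_le ha hb hmomp hmomm hg h0 hfin hint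
  · intro g g' hg hL h0 _
    exact integral_smooth_ge ha hb hmomp hmomm hg hL h0
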